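/- For every a ∈ (0,1), define A_{n,k} = max_{0 ≤ j ≤ k} a_{n,j}. Then for all n, r ≥ 0 and all k ≥ 0: A_{n+r,k} ≤ (k+2)^{2^r}·(A_{n,k})^{2^r}. In particular a_{n+r,k} ≤ ((k+2)·A_{n,k})^{2^r}. (Remark 2.2, part 2, with explicit constant (k+2) in place of k.) -/

import Mathlib

/-- `A_a = {⌊n/a⌋ : n ∈ ℕ, n ≥ 1}`, the set of floors of positive multiples of `1/a`. -/
def Aset (a : ℝ) : Set ℕ := {m | ∃ n : ℕ, 1 ≤ n ∧ m = ⌊(n : ℝ) / a⌋₊}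

/-- The generating function `F_n(t) = ∑_k a_{n,k} t^k` of the face numbers of the basic
Hanner-type polytopes: `F_0 = t + 2`, and `F_{n+1} = F_n ^ 2` for `n ∈ A_a` (product
step), `F_{n+1} = t·F_n ^ 2 + 2·F_n` for `n ∉ A_a` (convex hull step).
The coefficient `a_{n,k}` is `(F a n).coeff k`. -/
noncomputable def F (a : ℝ) : ℕ → Polynomial ℤ
  | 0 => Polynomial.X + 2
  | n + 1 =>
      haveI := Classical.propDecidable (n ∈ Aset a)
      if n ∈ Aset a then F a n ^ 2
      else Polynomial.X * F a n ^ 2 + 2 * F a n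

/-- `A_{n,k} = max_{0 ≤ j ≤ k} a_{n,j}`, the maximum of the coefficients of `F_n` of
index at most `k`. -/
noncomputable def maxA (a : ℝ) (n k : ℕ) : ℤ :=
  (Finset.range (k + 1)).sup' (by simp) fun j => (F a n).coeff j

theorem F_coeff_nonneg (a : ℝ) (n : ℕ) : ∀ k, 0 ≤ (F a n).coeff k := by
  induction n with
  | zero =>
    intro k
    have h2 : (2 : Polynomial ℤ) = Polynomial.C 2 := rfl
    rw [F, h2, Polynomial.coeff_add, Polynomial.coeff_X, Polynomial.coeff_C]
    split_ifs <;> norm_num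
  | succ n ih =>
    have hsq : ∀ k, 0 ≤ (F a n ^ 2).coeff k := by
      intro k
      rw [pow_two, Polynomial.coeff_mul]
      exact Finset.sum_nonneg fun p _ => mul_nonneg (ih _) (ih _)
    intro k
    rw [F]
    split_ifs
    · exact hsq k
    · have h2 : (2 : Polynomial ℤ) = Polynomial.C 2 := rfl
      rw [h2, Polynomial.coeff_add, Polynomial.coeff_C_mul]
      have h3 : 0 ≤ (Polynomial.X * F a n ^ 2).coeff k := by
        cases k with
        | zero => simp
        | succ k => rw [Polynomial.coeff_X_mul]; exact hsq k
      have := ih k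
      linarith

theorem coeff_le_maxA (a : ℝ) (n : ℕ) {j k : ℕ} (h : j ≤ k) :
    (F a n).coeff j ≤ maxA a n k :=
  Finset.le_sup' (fun j => (F a n).coeff j) (Finset.mem_range.2 (by omega))

theorem maxA_nonneg (a : ℝ) (n k : ℕ) : 0 ≤ maxA a n k :=
  (F_coeff_nonneg a n 0).trans (coeff_le_maxA a n (Nat.zero_le k))

theorem sq_coeff_le (a : ℝ) (n : ℕ) {j k : ℕ} (h : j ≤ k) :
    (F a n ^ 2).coeff j ≤ ((j : ℤ) + 1) * maxA a n k ^ 2 := by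
  rw [pow_two, Polynomial.coeff_mul]
  have := Finset.sum_le_card_nsmul (Finset.HasAntidiagonal.antidiagonal j)
    (fun p => (F a n).coeff p.1 * (F a n).coeff p.2) (maxA a n k ^ 2) (by
      intro p hp
      rw [Finset.HasAntidiagonal.mem_antidiagonal] at hp
      rw [pow_two]
      exact mul_le_mul (coeff_le_maxA a n (by omega)) (coeff_le_maxA a n (by omega))
        (F_coeff_nonneg _ _ _) (maxA_nonneg _ _ _))
  simpa using this

theorem maxA_step (a : ℝ) (n k : ℕ) :
    maxA a (n + 1) k ≤ ((k : ℤ) + 2) * maxA a n k ^ 2 := by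
  have hM := maxA_nonneg a n k
  have hM2 : 0 ≤ maxA a n k ^ 2 := sq_nonneg _
  have hMM : maxA a n k ≤ maxA a n k ^ 2 := Int.le_self_sq _
  conv_lhs => rw [maxA]
  refine Finset.sup'_le _ _ fun j hj => ?_
  have hjk : j ≤ k := by have := Finset.mem_range.1 hj; omega
  have hjk' : (j : ℤ) ≤ k := by exact_mod_cast hjk
  rw [F]
  split_ifs
  · exact (sq_coeff_le a n hjk).trans (by gcongr; norm_num)
  · have h2 : (2 : Polynomial ℤ) = Polynomial.C 2 := rfl
    rw [h2, Polynomial.coeff_add, Polynomial.coeff_C_mul]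
    have h3 : (Polynomial.X * F a n ^ 2).coeff j ≤ (k : ℤ) * maxA a n k ^ 2 := by
      cases j with
      | zero => simp; positivity
      | succ j =>
        rw [Polynomial.coeff_X_mul]
        refine (sq_coeff_le a n (by omega : j ≤ k)).trans ?_
        push_cast at hjk'
        gcongr
    have := coeff_le_maxA a n hjk
    linarith

theorem maxA_iter (a : ℝ) (n r k : ℕ) :
    ((k : ℤ) + 2) * maxA a (n + r) k ≤ (((k : ℤ) + 2) * maxA a n k) ^ (2 ^ r) := by
  induction r with
  | zero => simp
  | succ r ih =>
    have h0 := maxA_nonneg a (n + r) k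
    calc ((k : ℤ) + 2) * maxA a (n + r + 1) k
        ≤ ((k : ℤ) + 2) * (((k : ℤ) + 2) * maxA a (n + r) k ^ 2) := by
          gcongr; exact maxA_step a (n + r) k
      _ = (((k : ℤ) + 2) * maxA a (n + r) k) ^ 2 := by ring
      _ ≤ ((((k : ℤ) + 2) * maxA a n k) ^ (2 ^ r)) ^ 2 := by gcongr
      _ = _ := by rw [← pow_mul, ← pow_succ]

/-- **Remark 2.2, part 2** (with explicit constant `k+2`). For all `n, r, k`:
`A_{n+r,k} ≤ (k+2)^(2^r)·A_{n,k}^(2^r)`, and in particular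
`a_{n+r,k} ≤ ((k+2)·A_{n,k})^(2^r)`. -/
theorem maxA_growth (a : ℝ) (ha : a ∈ Set.Ioo (0 : ℝ) 1) (n r k : ℕ) :
    maxA a (n + r) k ≤ ((k : ℤ) + 2) ^ (2 ^ r) * maxA a n k ^ (2 ^ r) ∧
    (F a (n + r)).coeff k ≤ (((k : ℤ) + 2) * maxA a n k) ^ (2 ^ r) := by
  have h := maxA_iter a n r k
  have h0 := maxA_nonneg a (n + r) k
  have h1 : maxA a (n + r) k ≤ (((k : ℤ) + 2) * maxA a n k) ^ (2 ^ r) := by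
    have : 0 ≤ (k : ℤ) * maxA a (n + r) k := by positivity
    linarith
  exact ⟨by rw [← mul_pow]; exact h1, (coeff_le_maxA a (n + r) le_rfl).trans h1⟩
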